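/- arXiv:2112.07483 — 3 statements merged into one kernel-verified Lean document; each statement's English description precedes it below -/
import Mathlib

section
/- (Pohozaev identity) Let d ≥ 1 and p > 1. Let Q : ℝ^d → ℝ be twice continuously differentiable, satisfy the elliptic equation ΔQ − Q + |Q|^{p−1}Q = 0 on ℝ^d, and satisfy the decay bounds |Q(x)| + |∇Q(x)| + |∇²Q(x)| ≤ C e^{−δ|x|} for all x ∈ ℝ^d (with constants C, δ > 0). Then (d − 2) ∫_{ℝ^d} |∇Q|² dx + d ∫_{ℝ^d} Q² dx = (2d/(p+1)) ∫_{ℝ^d} |Q|^{p+1} dx. -/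
/-!
The identity is the integrated form of a pointwise one. With `S = x · ∇Q`, put
`F i = 2 S ∂ᵢQ - xᵢ |∇Q|² + xᵢ (-Q² + (2/(p+1)) |Q|^(p+1))`. By symmetry of the Hessian, the terms
`± 2 ∑ xᵢ ∂ⱼQ ∂ᵢ∂ⱼQ` of the divergence cancel, which leaves
`div F = (2-d) |∇Q|² - d Q² + (2d/(p+1)) |Q|^(p+1) + 2 S (ΔQ - Q + |Q|^(p-1) Q)`,
and the last term vanishes by the equation. Each `F i` and each `∂ᵢ(F i)` is continuous and decays
exponentially, so `∫ div F = 0` (`ExpDecay.integral_lineDeriv_eq_zero`), which is the claim.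

Decay is handled through the predicate `ExpDecay δ f`, stable under sums and products; a factor
`xᵢ` is absorbed by passing from the rate `δ` to `δ / 2` (`ExpDecay.coord_mul`).
-/

open MeasureTheory Real

/-- `f` is continuous and `O(exp (-δ |x|))`, uniformly on the whole space. -/
def ExpDecay {d : ℕ} (δ : ℝ) (f : EuclideanSpace ℝ (Fin d) → ℝ) : Prop :=
  Continuous f ∧ ∃ K, 0 ≤ K ∧ ∀ x, |f x| ≤ K * Real.exp (-δ * ‖x‖)

namespace ExpDecay

variable {d : ℕ} {δ : ℝ} {f g : EuclideanSpace ℝ (Fin d) → ℝ}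

lemma add (hf : ExpDecay δ f) (hg : ExpDecay δ g) : ExpDecay δ (fun x => f x + g x) := by
  obtain ⟨cf, K, hK, hf⟩ := hf
  obtain ⟨cg, L, hL, hg⟩ := hg
  refine ⟨cf.add cg, K + L, by positivity, fun x => ?_⟩
  have := abs_add_le (f x) (g x)
  linarith [hf x, hg x]

lemma const_mul (c : ℝ) (hf : ExpDecay δ f) : ExpDecay δ (fun x => c * f x) := by
  obtain ⟨cf, K, hK, hf⟩ := hf
  refine ⟨continuous_const.mul cf, |c| * K, by positivity, fun x => ?_⟩
  rw [abs_mul, mul_assoc]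
  exact mul_le_mul_of_nonneg_left (hf x) (abs_nonneg c)

lemma sub (hf : ExpDecay δ f) (hg : ExpDecay δ g) : ExpDecay δ (fun x => f x - g x) := by
  simpa [sub_eq_add_neg] using hf.add (hg.const_mul (-1))

lemma sum {ι : Type*} (s : Finset ι) {f : ι → EuclideanSpace ℝ (Fin d) → ℝ}
    (hf : ∀ i, ExpDecay δ (f i)) : ExpDecay δ (fun x => ∑ i ∈ s, f i x) := by
  classical
  induction s using Finset.induction_on with
  | empty => exact ⟨by simpa using continuous_const, 0, le_rfl, fun x => by simp⟩
  | insert a s ha ih => simpa [Finset.sum_insert ha] using (hf a).add ih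

lemma mul (hδ : 0 < δ) (hf : ExpDecay δ f) (hg : ExpDecay δ g) :
    ExpDecay δ (fun x => f x * g x) := by
  obtain ⟨cf, K, hK, hf⟩ := hf
  obtain ⟨cg, L, hL, hg⟩ := hg
  refine ⟨cf.mul cg, K * L, by positivity, fun x => ?_⟩
  have h1 : Real.exp (-δ * ‖x‖) ≤ 1 := by
    rw [Real.exp_le_one_iff]
    nlinarith [norm_nonneg x]
  have hg' : |g x| ≤ L := (hg x).trans (mul_le_of_le_one_right hL h1)
  rw [abs_mul]
  calc |f x| * |g x| ≤ (K * Real.exp (-δ * ‖x‖)) * L :=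
        mul_le_mul (hf x) hg' (abs_nonneg _) (by positivity)
    _ = _ := by ring

lemma half (hδ : 0 < δ) (hf : ExpDecay δ f) : ExpDecay (δ / 2) f := by
  obtain ⟨cf, K, hK, hf⟩ := hf
  refine ⟨cf, K, hK, fun x => (hf x).trans ?_⟩
  gcongr
  linarith

lemma coord_mul (hδ : 0 < δ) (i : Fin d) (hf : ExpDecay δ f) :
    ExpDecay (δ / 2) (fun x => x i * f x) := by
  obtain ⟨cf, K, hK, hf⟩ := hf
  refine ⟨by fun_prop, K * (2 / δ), by positivity, fun x => ?_⟩
  have h1 : |x i| ≤ ‖x‖ := by simpa using PiLp.norm_apply_le x i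
  have h2 : ‖x‖ ≤ (2 / δ) * Real.exp (δ / 2 * ‖x‖) := by
    have := Real.add_one_le_exp (δ / 2 * ‖x‖)
    calc ‖x‖ = (2 / δ) * (δ / 2 * ‖x‖) := by field_simp
      _ ≤ _ := by gcongr; linarith
  have h3 : Real.exp (-(δ / 2) * ‖x‖) = Real.exp (δ / 2 * ‖x‖) * Real.exp (-δ * ‖x‖) := by
    rw [← Real.exp_add]; congr 1; ring
  rw [abs_mul, h3]
  calc |x i| * |f x| ≤ ((2 / δ) * Real.exp (δ / 2 * ‖x‖)) * (K * Real.exp (-δ * ‖x‖)) :=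
        mul_le_mul (h1.trans h2) (hf x) (abs_nonneg _) (by positivity)
    _ = _ := by ring

lemma integrable (hδ : 0 < δ) (hf : ExpDecay δ f) : Integrable f := by
  obtain ⟨cf, K, hK, hf⟩ := hf
  -- Compare with `(1 + |x|)^(-(d+1))`: exponentials dominate powers.
  obtain ⟨M, hM⟩ : ∃ M, ∀ r : ℝ, 0 ≤ r → (1 + r) ^ (d + 1) * Real.exp (-δ * r) ≤ M := by
    refine ⟨(d + 1).factorial / δ ^ (d + 1) * Real.exp δ, fun r hr => ?_⟩
    have h := Real.pow_div_factorial_le_exp (δ * (1 + r)) (by positivity) (d + 1)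
    have h3 : Real.exp (δ * (1 + r)) * Real.exp (-δ * r) = Real.exp δ := by
      rw [← Real.exp_add]; congr 1; ring
    rw [← h3, ← mul_assoc]
    gcongr
    calc (1 + r) ^ (d + 1)
        = (d + 1).factorial / δ ^ (d + 1) * ((δ * (1 + r)) ^ (d + 1) / (d + 1).factorial) := by
          rw [mul_pow]; field_simp
      _ ≤ _ := by gcongr
  have hI : Integrable (fun x : EuclideanSpace ℝ (Fin d) => (1 + ‖x‖) ^ (-((d + 1 : ℕ) : ℝ))) :=
    integrable_one_add_norm (by simp)
  refine (hI.const_mul (K * M)).mono' cf.aestronglyMeasurable (Filter.Eventually.of_forall ?_)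
  intro x
  rw [Real.norm_eq_abs, Real.rpow_neg (by positivity), Real.rpow_natCast, mul_assoc]
  refine (hf x).trans (mul_le_mul_of_nonneg_left ?_ hK)
  rw [← div_eq_mul_inv, le_div_iff₀ (by positivity), mul_comm]
  exact hM _ (norm_nonneg x)

lemma integral_lineDeriv_eq_zero (hδ : 0 < δ) {v : EuclideanSpace ℝ (Fin d)}
    (hf : ExpDecay δ f) (hg : ExpDecay δ g) (h : ∀ x, HasLineDerivAt ℝ f (g x) x v) :
    ∫ x, g x = 0 := by
  -- Integration by parts against the constant function `1`.
  have key := integral_bilinear_hasLineDerivAt_right_eq_neg_left_of_integrable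
    (μ := (volume : Measure (EuclideanSpace ℝ (Fin d))))
    (f := fun _ => (1 : ℝ)) (f' := fun _ => 0) (g := f) (g' := g) (v := v)
    (B := ContinuousLinearMap.mul ℝ ℝ) (by simp) (by simpa using hg.integrable hδ)
    (by simpa using hf.integrable hδ)
    (fun x _ => by simpa [HasLineDerivAt] using hasDerivAt_const (0 : ℝ) (1 : ℝ))
    (fun x _ => h x)
  simpa using key

end ExpDecay

/-- Pohozaev identity for smooth exponentially decaying solutions of
`ΔQ - Q + |Q|^{p-1} Q = 0` on `ℝ^d`:
`(d-2) ∫ |∇Q|² + d ∫ Q² = (2d/(p+1)) ∫ |Q|^{p+1}`. -/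
theorem pohozaev_identity
    (d : ℕ) (hd : 1 ≤ d) (p : ℝ) (hp : 1 < p)
    (Q : EuclideanSpace ℝ (Fin d) → ℝ) (hQ : ContDiff ℝ 2 Q)
    (hQeq : ∀ x : EuclideanSpace ℝ (Fin d),
      (∑ i : Fin d, fderiv ℝ (fun y => fderiv ℝ Q y (EuclideanSpace.single i (1 : ℝ))) x
          (EuclideanSpace.single i (1 : ℝ)))
        - Q x + |Q x| ^ (p - 1) * Q x = 0)
    (C δ : ℝ) (hC : 0 < C) (hδ : 0 < δ)
    (hdecay : ∀ x, |Q x| + ‖gradient Q x‖ + ‖iteratedFDeriv ℝ 2 Q x‖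
      ≤ C * Real.exp (-δ * ‖x‖)) :
    ((d : ℝ) - 2) * (∫ x, ‖gradient Q x‖ ^ 2) + (d : ℝ) * (∫ x, (Q x) ^ 2)
      = (2 * (d : ℝ) / (p + 1)) * ∫ x, |Q x| ^ (p + 1) := by
  set e : Fin d → EuclideanSpace ℝ (Fin d) := fun i => EuclideanSpace.single i (1 : ℝ) with he
  have hen : ∀ i, ‖e i‖ = 1 := fun i => by simp [he]
  set u : Fin d → EuclideanSpace ℝ (Fin d) → ℝ := fun i y => fderiv ℝ Q y (e i) with hu
  set h : Fin d → Fin d → EuclideanSpace ℝ (Fin d) → ℝ :=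
    fun i j y => fderiv ℝ (u i) y (e j) with hh
  have hQ1 : ContDiff ℝ 1 (fderiv ℝ Q) := hQ.fderiv_right (by norm_num)
  have hu1 : ∀ i, ContDiff ℝ 1 (u i) := fun i => hQ1.clm_apply contDiff_const
  have hh2 : ∀ i j x, h i j x = fderiv ℝ (fderiv ℝ Q) x (e j) (e i) := by
    intro i j x
    have hd1 : DifferentiableAt ℝ (fderiv ℝ Q) x := (hQ1.differentiable one_ne_zero) x
    have := (hd1.hasFDerivAt.clm_apply (hasFDerivAt_const (e i) x)).fderiv
    simp only [hh, hu]
    rw [this]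
    simp
  have hsymm : ∀ i j x, h i j x = h j i x := by
    intro i j x
    rw [hh2, hh2]
    exact (hQ.contDiffAt.isSymmSndFDerivAt (by simp)).eq _ _
  have hgrad : ∀ i x, gradient Q x i = u i x := by
    intro i x
    have h1 : inner ℝ (gradient Q x) (e i) = u i x := by
      simp [gradient, hu, InnerProductSpace.toDual_symm_apply]
    rw [← h1, he, EuclideanSpace.inner_single_right]
    simp
  have hgradsq : ∀ x, ‖gradient Q x‖ ^ 2 = ∑ i, u i x * u i x := by
    intro x
    rw [EuclideanSpace.real_norm_sq_eq]
    simp [hgrad, sq]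
  -- The building blocks decay at rate `δ`.
  have dQ : ExpDecay δ Q := ⟨hQ.continuous, C, hC.le, fun x => by
    linarith [hdecay x, norm_nonneg (gradient Q x), norm_nonneg (iteratedFDeriv ℝ 2 Q x)]⟩
  have du : ∀ i, ExpDecay δ (u i) := fun i => ⟨(hu1 i).continuous, C, hC.le, fun x => by
    have h1 : |u i x| ≤ ‖gradient Q x‖ := by
      rw [← hgrad]; simpa using PiLp.norm_apply_le (gradient Q x) i
    linarith [hdecay x, abs_nonneg (Q x), norm_nonneg (iteratedFDeriv ℝ 2 Q x)]⟩
  have dh : ∀ i j, ExpDecay δ (h i j) := fun i j =>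
    ⟨((hu1 i).continuous_fderiv one_ne_zero).clm_apply continuous_const, C, hC.le, fun x => by
    have h1 : |h i j x| ≤ ‖iteratedFDeriv ℝ 2 Q x‖ := by
      have h2 := (iteratedFDeriv ℝ 2 Q x).le_opNorm ![e j, e i]
      rw [iteratedFDeriv_two_apply] at h2
      simpa [hh2, Fin.prod_univ_two, hen] using h2
    linarith [hdecay x, abs_nonneg (Q x), norm_nonneg (gradient Q x)]⟩
  set N : EuclideanSpace ℝ (Fin d) → ℝ := fun x => |Q x| ^ (p - 1) * Q x with hN
  have dN : ExpDecay δ N := by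
    refine ⟨(hQ.continuous.abs.rpow_const fun x => Or.inr (by linarith)).mul hQ.continuous,
      C ^ (p - 1) * C, by positivity, fun x => ?_⟩
    have hQx : |Q x| ≤ C * Real.exp (-δ * ‖x‖) := by
      linarith [hdecay x, norm_nonneg (gradient Q x), norm_nonneg (iteratedFDeriv ℝ 2 Q x)]
    have hQC : |Q x| ≤ C := hQx.trans (mul_le_of_le_one_right hC.le (by
      rw [Real.exp_le_one_iff]; nlinarith [norm_nonneg x]))
    rw [hN, abs_mul, abs_of_nonneg (by positivity : 0 ≤ |Q x| ^ (p - 1)), mul_assoc]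
    exact mul_le_mul (Real.rpow_le_rpow (abs_nonneg _) hQC (by linarith)) hQx (abs_nonneg _)
      (by positivity)
  have hpow : ∀ x, |Q x| ^ (p + 1) = Q x * N x := by
    intro x
    have : Q x * N x = |Q x| ^ (p - 1) * |Q x| ^ (2 : ℝ) := by
      rw [Real.rpow_two, sq_abs, hN]; ring
    rw [this, ← Real.rpow_add_of_nonneg (abs_nonneg _) (by linarith) (by norm_num)]
    congr 1; ring
  -- From here on all decay is at rate `δ / 2`, which leaves room for one factor `xᵢ`.
  have hδ2 : 0 < δ / 2 := by positivity
  have eQ := dQ.half hδ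
  have eN := dN.half hδ
  have eu := fun i => (du i).half hδ
  have eh := fun i j => (dh i j).half hδ
  have exu := fun i j => (du j).coord_mul hδ i
  have exQ := fun i => dQ.coord_mul hδ i
  have exh := fun i j k => (dh j k).coord_mul hδ i
  set c : ℝ := 2 / (p + 1) with hc
  set F : Fin d → EuclideanSpace ℝ (Fin d) → ℝ := fun i x =>
    2 * ((∑ j, x j * u j x) * u i x) - x i * (∑ j, u j x * u j x)
      + x i * (c * |Q x| ^ (p + 1) - Q x * Q x) with hF
  set T : Fin d → EuclideanSpace ℝ (Fin d) → ℝ := fun i x =>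
    2 * ((u i x + ∑ j, x j * h j i x) * u i x + (∑ j, x j * u j x) * h i i x)
      - ((∑ j, u j x * u j x) + x i * (∑ j, 2 * (u j x * h j i x)))
      + ((c * |Q x| ^ (p + 1) - Q x * Q x) + x i * (2 * (N x * u i x) - 2 * (Q x * u i x)))
    with hT
  have dF : ∀ i, ExpDecay (δ / 2) (F i) := by
    intro i
    have := (((((ExpDecay.sum Finset.univ fun j => exu j j).mul hδ2 (eu i)).const_mul 2).sub
      (ExpDecay.sum Finset.univ fun j => (exu i j).mul hδ2 (eu j))).add
      ((((exQ i).mul hδ2 eN).const_mul c).sub ((exQ i).mul hδ2 eQ)))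
    convert this using 2 with x
    simp only [hF, hpow, Finset.mul_sum, mul_assoc]
    ring
  have dT : ∀ i, ExpDecay (δ / 2) (T i) := by
    intro i
    have := (((((eu i).add (ExpDecay.sum Finset.univ fun j => exh j j i)).mul hδ2 (eu i)).add
      ((ExpDecay.sum Finset.univ fun j => exu j j).mul hδ2 (eh i i))).const_mul 2).sub
      ((ExpDecay.sum Finset.univ fun j => (eu j).mul hδ2 (eu j)).add
      (ExpDecay.sum Finset.univ fun j => ((exu i j).mul hδ2 (eh j i)).const_mul 2)) |>.add
      ((((eQ.mul hδ2 eN).const_mul c).sub (eQ.mul hδ2 eQ)).add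
      (((eN.mul hδ2 (exu i i)).const_mul 2).sub ((eQ.mul hδ2 (exu i i)).const_mul 2)))
    convert this using 2 with x
    have h1 : x i * (∑ j, 2 * (u j x * h j i x)) = ∑ j, 2 * (x i * u j x * h j i x) := by
      rw [Finset.mul_sum]
      exact Finset.sum_congr rfl fun j _ => by ring
    simp only [hT, hpow, h1]
    ring
  have hder : ∀ i x, HasLineDerivAt ℝ (F i) (T i x) x (e i) := by
    intro i x
    have lQ : HasDerivAt (fun t : ℝ => Q (x + t • e i)) (u i x) 0 :=
      ((hQ.differentiable two_ne_zero) x).hasFDerivAt.hasLineDerivAt (e i)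
    have lu : ∀ j, HasDerivAt (fun t : ℝ => u j (x + t • e i)) (h j i x) 0 := fun j =>
      (((hu1 j).differentiable one_ne_zero) x).hasFDerivAt.hasLineDerivAt (e i)
    have lx : ∀ j, HasDerivAt (fun t : ℝ => (x + t • e i) j) (if j = i then 1 else 0) 0 := by
      intro j
      have := ((hasDerivAt_id (0 : ℝ)).mul_const (e i j)).const_add (x j)
      simpa [he, Pi.single_apply] using this
    have lP : HasDerivAt (fun t : ℝ => |Q (x + t • e i)| ^ (p + 1)) ((p + 1) * N x * u i x) 0 := by
      have h1 := (hasDerivAt_abs_rpow (Q (x + (0 : ℝ) • e i)) (by linarith : 1 < p + 1)).comp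
        (0 : ℝ) lQ
      have h2 : p + 1 - 2 = p - 1 := by ring
      simpa [Function.comp_def, h2, hN, mul_assoc] using h1
    have lS := HasDerivAt.fun_sum (u := Finset.univ) fun j (_ : j ∈ Finset.univ) =>
      (lx j).fun_mul (lu j)
    have lG := HasDerivAt.fun_sum (u := Finset.univ) fun j (_ : j ∈ Finset.univ) =>
      (lu j).fun_mul (lu j)
    have l := (((lS.fun_mul (lu i)).const_mul 2).fun_sub ((lx i).fun_mul lG)).fun_add
      ((lx i).fun_mul ((lP.const_mul c).fun_sub (lQ.fun_mul lQ)))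
    refine HasDerivAt.congr_deriv l ?_
    have hp1 : c * ((p + 1) * N x * u i x) = 2 * (N x * u i x) := by
      rw [hc]; field_simp
    have hg : ∑ j, (h j i x * u j x + u j x * h j i x) = ∑ j, 2 * (u j x * h j i x) :=
      Finset.sum_congr rfl fun j _ => by ring
    simp only [zero_smul, add_zero, hp1, hg, Finset.sum_add_distrib, ite_mul, one_mul, zero_mul,
      Finset.sum_ite_eq', Finset.mem_univ, if_true, hT]
    ring
  have hTint : ∀ i, ∫ x, T i x = 0 := fun i =>
    (dF i).integral_lineDeriv_eq_zero hδ2 (dT i) (hder i)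
  have hdiv : ∀ x, ∑ i, T i x = (2 - (d : ℝ)) * ‖gradient Q x‖ ^ 2 - d * (Q x) ^ 2
      + d * c * |Q x| ^ (p + 1) := by
    intro x
    have hswap : ∑ i, (∑ j, x j * h j i x) * u i x = ∑ i, x i * ∑ j, u j x * h j i x := by
      simp only [Finset.sum_mul, Finset.mul_sum]
      rw [Finset.sum_comm]
      refine Finset.sum_congr rfl fun i _ => Finset.sum_congr rfl fun j _ => ?_
      rw [hsymm i j]; ring
    have heq : ∑ i, h i i x = Q x - N x := by
      have := hQeq x
      simp only [hh, hu, hN]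
      linarith
    have hsplit : ∀ i, T i x = 2 * (u i x * u i x) + 2 * ((∑ j, x j * h j i x) * u i x)
        + (2 * ∑ j, x j * u j x) * h i i x - (∑ j, u j x * u j x)
        - 2 * (x i * ∑ j, u j x * h j i x) + (c * |Q x| ^ (p + 1) - Q x * Q x)
        + (2 * (N x - Q x)) * (x i * u i x) := by
      intro i
      simp only [hT, ← Finset.mul_sum]
      ring
    simp only [hsplit, Finset.sum_add_distrib, Finset.sum_sub_distrib, ← Finset.mul_sum, hswap,
      heq, Finset.sum_const, Finset.card_univ, Fintype.card_fin, nsmul_eq_mul, hgradsq]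
    ring
  have iG : Integrable (fun x => ‖gradient Q x‖ ^ 2) := by
    simp only [hgradsq]
    exact (ExpDecay.sum Finset.univ fun j => (eu j).mul hδ2 (eu j)).integrable hδ2
  have iQ : Integrable (fun x => (Q x) ^ 2) := by
    simp only [sq]
    exact (eQ.mul hδ2 eQ).integrable hδ2
  have iP : Integrable (fun x => |Q x| ^ (p + 1)) := by
    simp only [hpow]
    exact (eQ.mul hδ2 eN).integrable hδ2
  have htot : ∫ x, ∑ i, T i x = 0 := by
    rw [integral_finsetSum _ fun i _ => (dT i).integrable hδ2]
    simp [hTint]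
  simp only [hdiv] at htot
  have iGQ : Integrable (fun x => (2 - (d : ℝ)) * ‖gradient Q x‖ ^ 2 - d * (Q x) ^ 2) :=
    (iG.const_mul _).sub (iQ.const_mul _)
  rw [integral_add iGQ (iP.const_mul _),
    integral_sub (iG.const_mul _) (iQ.const_mul _), integral_const_mul, integral_const_mul,
    integral_const_mul] at htot
  have hc2 : 2 * (d : ℝ) / (p + 1) = d * c := by rw [hc]; ring
  rw [hc2]
  linarith
end

section
/- Let d ≥ 1 and p > 1. Let Q : ℝ^d → ℝ be twice continuously differentiable, satisfy the elliptic equation ΔQ − Q + |Q|^{p−1}Q = 0 on ℝ^d, and satisfy the decay bounds |Q(x)| + |∇Q(x)| + |∇²Q(x)| ≤ C e^{−δ|x|} for all x ∈ ℝ^d (with constants C, δ > 0). Then ∫_{ℝ^d} |∇Q|² dx + ∫_{ℝ^d} Q² dx = ∫_{ℝ^d} |Q|^{p+1} dx. -/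
open MeasureTheory Real

/-!
Multiplying the equation by `Q` gives the pointwise identity
`|Q|^{p+1} = Q² - ∑ᵢ Q ∂ᵢ∂ᵢQ`. The decay bounds make `Q²`, `Q ∂ᵢQ`, `(∂ᵢQ)²` and `Q ∂ᵢ∂ᵢQ`
integrable (`integrable_mul_of_decay`), so each term of the sum can be integrated by parts without
boundary contribution: `∫ Q ∂ᵢ∂ᵢQ = -∫ (∂ᵢQ)²`. Summing over `i` and using `|∇Q|² = ∑ᵢ (∂ᵢQ)²`
gives the identity.
-/

/-- In polar coordinates this reduces to the integrability of `r ^ (d - 1) * exp (-δ * r)`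
on `(0, ∞)`. -/
lemma integrable_exp_neg_mul_norm {d : ℕ} (hd : 1 ≤ d) {δ : ℝ} (hδ : 0 < δ) :
    Integrable (fun x : EuclideanSpace ℝ (Fin d) => Real.exp (-δ * ‖x‖)) := by
  have : Nonempty (Fin d) := ⟨⟨0, hd⟩⟩
  have h := integrable_fun_norm_addHaar (volume : Measure (EuclideanSpace ℝ (Fin d)))
    (f := fun r : ℝ => Real.exp (-δ * r))
  refine h.2 ?_
  have h2 := integrableOn_rpow_mul_exp_neg_mul_rpow (p := 1) (s := ((d - 1 : ℕ) : ℝ)) (b := δ)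
    (lt_of_lt_of_le (by norm_num) (Nat.cast_nonneg _)) one_pos hδ
  simpa [Real.rpow_natCast] using h2

lemma integrable_mul_of_decay {d : ℕ} (hd : 1 ≤ d) {C δ : ℝ} (hδ : 0 < δ)
    {f g : EuclideanSpace ℝ (Fin d) → ℝ} (hf : Continuous f) (hg : Continuous g)
    (hfb : ∀ x, |f x| ≤ C * Real.exp (-δ * ‖x‖)) (hgb : ∀ x, |g x| ≤ C * Real.exp (-δ * ‖x‖)) :
    Integrable (fun x => f x * g x) := by
  refine ((integrable_exp_neg_mul_norm hd hδ).const_mul (C * C)).mono'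
    (hf.mul hg).aestronglyMeasurable (Filter.Eventually.of_forall fun x => ?_)
  have hE : Real.exp (-δ * ‖x‖) ≤ 1 :=
    Real.exp_le_one_iff.2 (by nlinarith [norm_nonneg x])
  have hE0 := Real.exp_pos (-δ * ‖x‖)
  rw [Real.norm_eq_abs, abs_mul]
  calc |f x| * |g x|
      ≤ (C * Real.exp (-δ * ‖x‖)) * (C * Real.exp (-δ * ‖x‖)) :=
        mul_le_mul (hfb x) (hgb x) (abs_nonneg _) ((abs_nonneg _).trans (hfb x))
    _ = (C * C) * (Real.exp (-δ * ‖x‖) * Real.exp (-δ * ‖x‖)) := by ring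
    _ ≤ (C * C) * Real.exp (-δ * ‖x‖) :=
        mul_le_mul_of_nonneg_left (mul_le_of_le_one_left hE0.le hE) (mul_self_nonneg C)

/-- Energy identity for smooth exponentially decaying solutions of
`ΔQ - Q + |Q|^{p-1} Q = 0` on `ℝ^d`: `∫ |∇Q|² + ∫ Q² = ∫ |Q|^{p+1}`. -/
theorem ground_state_energy_identity
    (d : ℕ) (hd : 1 ≤ d) (p : ℝ) (hp : 1 < p)
    (Q : EuclideanSpace ℝ (Fin d) → ℝ) (hQ : ContDiff ℝ 2 Q)
    (hQeq : ∀ x : EuclideanSpace ℝ (Fin d),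
      (∑ i : Fin d, fderiv ℝ (fun y => fderiv ℝ Q y (EuclideanSpace.single i (1 : ℝ))) x
          (EuclideanSpace.single i (1 : ℝ)))
        - Q x + |Q x| ^ (p - 1) * Q x = 0)
    (C δ : ℝ) (hC : 0 < C) (hδ : 0 < δ)
    (hdecay : ∀ x, |Q x| + ‖gradient Q x‖ + ‖iteratedFDeriv ℝ 2 Q x‖
      ≤ C * Real.exp (-δ * ‖x‖)) :
    (∫ x, ‖gradient Q x‖ ^ 2) + (∫ x, (Q x) ^ 2) = ∫ x, |Q x| ^ (p + 1) := by
  set e : Fin d → EuclideanSpace ℝ (Fin d) := fun i => EuclideanSpace.single i (1 : ℝ) with he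
  have hen : ∀ i, ‖e i‖ = 1 := fun i => by simp [he]
  set D : Fin d → EuclideanSpace ℝ (Fin d) → ℝ := fun i y => fderiv ℝ Q y (e i) with hD
  set H : Fin d → EuclideanSpace ℝ (Fin d) → ℝ := fun i x => fderiv ℝ (D i) x (e i) with hH
  have hD1 : ContDiff ℝ 1 (fderiv ℝ Q) := hQ.fderiv_right (by norm_num)
  have hDi : ∀ i, ContDiff ℝ 1 (D i) := fun i => hD1.clm_apply contDiff_const
  have hHc : ∀ i, Continuous (H i) := fun i =>
    ((hDi i).continuous_fderiv (by norm_num)).clm_apply continuous_const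
  have hQb : ∀ x, |Q x| ≤ C * Real.exp (-δ * ‖x‖) := fun x => by
    linarith [hdecay x, norm_nonneg (gradient Q x), norm_nonneg (iteratedFDeriv ℝ 2 Q x)]
  have hDb : ∀ i x, |D i x| ≤ C * Real.exp (-δ * ‖x‖) := fun i x => by
    have h1 : |D i x| ≤ ‖gradient Q x‖ := by
      have := (fderiv ℝ Q x).le_opNorm (e i)
      rw [hen, mul_one] at this
      simpa [gradient, hD] using this
    linarith [hdecay x, abs_nonneg (Q x), norm_nonneg (iteratedFDeriv ℝ 2 Q x)]
  have hHb : ∀ i x, |H i x| ≤ C * Real.exp (-δ * ‖x‖) := fun i x => by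
    have h0 : H i x = iteratedFDeriv ℝ 2 Q x ![e i, e i] := by
      rw [iteratedFDeriv_two_apply]
      simp only [hH, hD]
      rw [fderiv_clm_apply (hD1.differentiable (by norm_num) x) (by fun_prop)]
      simp
    have h1 : |H i x| ≤ ‖iteratedFDeriv ℝ 2 Q x‖ := by
      have := (iteratedFDeriv ℝ 2 Q x).le_opNorm ![e i, e i]
      rw [h0]
      simpa [Fin.prod_univ_two, hen] using this
    linarith [hdecay x, abs_nonneg (Q x), norm_nonneg (gradient Q x)]
  have iQQ := integrable_mul_of_decay hd hδ hQ.continuous hQ.continuous hQb hQb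
  have iQD := fun i => integrable_mul_of_decay hd hδ hQ.continuous (hDi i).continuous hQb (hDb i)
  have iDD := fun i =>
    integrable_mul_of_decay hd hδ (hDi i).continuous (hDi i).continuous (hDb i) (hDb i)
  have iQH := fun i => integrable_mul_of_decay hd hδ hQ.continuous (hHc i) hQb (hHb i)
  have ibp : ∀ i, ∫ x, Q x * H i x = - ∫ x, D i x * D i x := fun i =>
    integral_mul_fderiv_eq_neg_fderiv_mul_of_integrable (iDD i) (iQH i) (iQD i)
      (fun x _ => hQ.differentiable (by norm_num) x)
      (fun x _ => (hDi i).differentiable (by norm_num) x)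
  have hgrad : ∀ x, ‖gradient Q x‖ ^ 2 = ∑ i, D i x * D i x := fun x => by
    rw [EuclideanSpace.norm_sq_eq]
    refine Finset.sum_congr rfl fun i _ => ?_
    have h1 : D i x = gradient Q x i := by
      have := inner_gradient_left (𝕜 := ℝ) (f := Q) (x := x) (y := e i)
      rw [show e i = EuclideanSpace.single i (1 : ℝ) from rfl,
        EuclideanSpace.inner_single_right] at this
      simpa using this.symm
    rw [h1, Real.norm_eq_abs, sq_abs, sq]
  have hpow : ∀ x, |Q x| ^ (p + 1) = Q x * Q x - ∑ i, Q x * H i x := fun x => by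
    have h1 : |Q x| ^ (p + 1) = |Q x| ^ (p - 1) * (Q x * Q x) := by
      rw [show p + 1 = (p - 1) + (2 : ℕ) by push_cast; ring,
        Real.rpow_add_natCast' (abs_nonneg _) (by push_cast; linarith), sq_abs, sq]
    have h2 : (∑ i, H i x) - Q x + |Q x| ^ (p - 1) * Q x = 0 := hQeq x
    rw [h1, ← Finset.mul_sum]
    linear_combination Q x * h2
  simp_rw [hgrad, hpow, sq]
  rw [integral_sub iQQ (integrable_finsetSum _ fun i _ => iQH i),
    integral_finsetSum _ (fun i _ => iQH i), integral_finsetSum _ (fun i _ => iDD i)]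
  simp_rw [ibp]
  rw [Finset.sum_neg_distrib]
  ring
end

section
/- (Existence of a localization cutoff) For every A₀ > 0 there exist a function ψ : ℝ → ℝ and a constant C > 0 such that: ψ is infinitely differentiable; ψ is nondecreasing; 0 ≤ ψ(x) ≤ 1 for all x; ψ(x) = 0 for all x ≤ −A₀; ψ(x) = 1 for all x ≥ A₀; and for all x ∈ ℝ, (ψ'(x))² ≤ C ψ(x) and (ψ''(x))² ≤ C ψ'(x). -/
/-!
The cutoff is Mathlib's `Real.smoothTransition`, rescaled from `[0, 1]` to `[-A₀, A₀]`. The two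
differential inequalities hold for *any* nonnegative, smooth, nondecreasing function that is locally
constant outside a compact set: a nonnegative `C²` function `f` with `|f''| ≤ M` satisfies `(f')² ≤ 2 M f`
(`sq_deriv_le_of_nonneg`), and this applies both to `f = ψ` and to `f = ψ'`, because `ψ ≥ 0` and
`ψ' ≥ 0`, and because `ψ''` and `ψ'''` are continuous with compact support, hence bounded.
-/

/-- Landau-type inequality. By Taylor's formula `0 ≤ f y ≤ f x + f' x (y - x) + M/2 (y - x)²` for
every `y`; the minimising choice `y = x - f' x / M` gives the claim. -/
theorem sq_deriv_le_of_nonneg {f : ℝ → ℝ} {M : ℝ} (hf : ContDiff ℝ 2 f) (h0 : ∀ x, 0 ≤ f x)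
    (hM : 0 < M) (hb : ∀ x, ‖deriv (deriv f) x‖ ≤ M) (x : ℝ) :
    (deriv f x) ^ 2 ≤ 2 * M * f x := by
  by_cases hd : deriv f x = 0
  · rw [hd]
    have := h0 x
    have : 0 ≤ 2 * M * f x := by positivity
    simpa using this
  have hne : x ≠ x - deriv f x / M := by
    intro h
    have : deriv f x / M = 0 := by linarith
    exact (div_ne_zero hd hM.ne') this
  obtain ⟨z, -, hz⟩ := taylor_mean_remainder_lagrange_iteratedDeriv (n := 1) hne
    (by exact_mod_cast hf.contDiffOn)
  have huniq : UniqueDiffWithinAt ℝ (Set.uIcc x (x - deriv f x / M)) x :=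
    (uniqueDiffOn_uIcc hne) x Set.left_mem_uIcc
  have hdw : derivWithin f (Set.uIcc x (x - deriv f x / M)) x = deriv f x :=
    (hf.differentiable (by norm_num) x).derivWithin huniq
  rw [taylorWithinEval_succ, taylor_within_zero_eval, iteratedDerivWithin_one, hdw,
    iteratedDeriv_succ, iteratedDeriv_one] at hz
  have hz2 := (abs_le.1 (hb z)).2
  have hy := h0 (x - deriv f x / M)
  set d := deriv f x
  set y := f (x - d / M)
  have e : y = f x - d * (d / M) + deriv (deriv f) z * (d / M) ^ 2 / 2 := by
    norm_num at hz
    linear_combination hz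
  have h3 : deriv (deriv f) z * (d / M) ^ 2 ≤ M * (d / M) ^ 2 := by gcongr
  have h4 : M * (d / M) ^ 2 = d ^ 2 / M := by field_simp
  have h5 : d * (d / M) = d ^ 2 / M := by ring
  have h6 : d ^ 2 / M ≤ 2 * f x := by linarith
  rw [div_le_iff₀ hM] at h6
  linarith

/-- Existence of a smooth nondecreasing localization cutoff `ψ` with
`ψ = 0` on `(-∞, -A₀]`, `ψ = 1` on `[A₀, ∞)`, `0 ≤ ψ ≤ 1`, and
`(ψ')² ≤ C ψ`, `(ψ'')² ≤ C ψ'`. -/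
theorem exists_localization_cutoff (A₀ : ℝ) (hA₀ : 0 < A₀) :
    ∃ ψ : ℝ → ℝ, ∃ C : ℝ, 0 < C ∧
      ContDiff ℝ (⊤ : ℕ∞) ψ ∧ Monotone ψ ∧
      (∀ x, 0 ≤ ψ x ∧ ψ x ≤ 1) ∧
      (∀ x, x ≤ -A₀ → ψ x = 0) ∧
      (∀ x, A₀ ≤ x → ψ x = 1) ∧
      (∀ x, (deriv ψ x) ^ 2 ≤ C * ψ x ∧ (deriv (deriv ψ) x) ^ 2 ≤ C * deriv ψ x) := by
  obtain ⟨ψ, hψ⟩ : ∃ ψ : ℝ → ℝ, ψ = fun x => Real.smoothTransition ((x + A₀) / (2 * A₀)) :=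
    ⟨_, rfl⟩
  have hs : ContDiff ℝ (⊤ : ℕ∞) ψ := by
    rw [hψ]
    exact Real.smoothTransition.contDiff.comp (by fun_prop)
  have hmono : Monotone ψ := by
    intro x y hxy
    rw [hψ]
    exact Real.smoothTransition.monotone (by gcongr)
  have h01 : ∀ x, 0 ≤ ψ x ∧ ψ x ≤ 1 := fun x => by
    rw [hψ]
    exact ⟨Real.smoothTransition.nonneg _, Real.smoothTransition.le_one _⟩
  have hleft : ∀ x, x ≤ -A₀ → ψ x = 0 := fun x hx => by
    rw [hψ]
    exact Real.smoothTransition.zero_of_nonpos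
      (div_nonpos_of_nonpos_of_nonneg (by linarith) (by linarith))
  have hright : ∀ x, A₀ ≤ x → ψ x = 1 := fun x hx => by
    rw [hψ]
    exact Real.smoothTransition.one_of_one_le ((one_le_div (by linarith)).2 (by linarith))
  have hcs : HasCompactSupport (deriv ψ) := by
    refine HasCompactSupport.intro (isCompact_Icc (a := -A₀) (b := A₀)) fun x hx => ?_
    rcases lt_or_ge x (-A₀) with h | h
    · have : ψ =ᶠ[nhds x] fun _ => 0 := by
        filter_upwards [Iio_mem_nhds h] with y hy using hleft y (le_of_lt hy)
      simp [this.deriv_eq]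
    · have h' : A₀ < x := by
        by_contra hc
        exact hx ⟨h, not_lt.1 hc⟩
      have : ψ =ᶠ[nhds x] fun _ => 1 := by
        filter_upwards [Ioi_mem_nhds h'] with y hy using hright y (le_of_lt hy)
      simp [this.deriv_eq]
  have hs1 : ContDiff ℝ (⊤ : ℕ∞) (deriv ψ) := (contDiff_infty_iff_deriv.1 hs).2
  have hs2 : ContDiff ℝ (⊤ : ℕ∞) (deriv (deriv ψ)) := (contDiff_infty_iff_deriv.1 hs1).2
  have hs3 : ContDiff ℝ (⊤ : ℕ∞) (deriv (deriv (deriv ψ))) := (contDiff_infty_iff_deriv.1 hs2).2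
  obtain ⟨M₁, hM₁⟩ := hcs.deriv.exists_bound_of_continuous hs2.continuous
  obtain ⟨M₂, hM₂⟩ := hcs.deriv.deriv.exists_bound_of_continuous hs3.continuous
  -- A common positive bound for `|ψ''|` and `|ψ'''|`.
  obtain ⟨M, hM, h1, h2⟩ : ∃ M, 0 < M ∧ M₁ ≤ M ∧ M₂ ≤ M :=
    ⟨max 1 (max M₁ M₂), by simp, by simp, by simp⟩
  have two_le : (2 : WithTop ℕ∞) ≤ ((⊤ : ℕ∞) : WithTop ℕ∞) :=
    WithTop.coe_le_coe.2 (le_top : (2 : ℕ∞) ≤ ⊤)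
  refine ⟨ψ, 2 * M, by positivity, hs, hmono, h01, hleft, hright, fun x => ⟨?_, ?_⟩⟩
  · exact sq_deriv_le_of_nonneg (hs.of_le two_le) (fun x => (h01 x).1) hM
      (fun x => (hM₁ x).trans h1) x
  · exact sq_deriv_le_of_nonneg (hs1.of_le two_le) (fun x => hmono.deriv_nonneg) hM
      (fun x => (hM₂ x).trans h2) x
end
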